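/- Define σ_{A₂}(τ, z₁, z₂) := θ(τ,z₁)·θ(τ,z₂)·θ(τ,z₁+z₂)/η(τ) on ℍ × ℂ². Then σ_{A₂} is a holomorphic Jacobi form of singular weight 1 and index 1 for the lattice A₂ (realized as ℤ² with Gram matrix S = (2,1;1,2)) with character v_η^8 and trivial Heisenberg character. Explicitly: (i) σ_{A₂}((aτ+b)/(cτ+d), z₁/(cτ+d), z₂/(cτ+d)) = v_η^8(A)·(cτ+d)·exp(πi c(2z₁²+2z₁z₂+2z₂²)/(cτ+d))·σ_{A₂}(τ,z₁,z₂) for all A = (a,b;c,d) ∈ SL₂(ℤ); (ii) σ_{A₂}(τ, z₁+x₁τ+y₁, z₂+x₂τ+y₂) = exp(−πi((2x₁²+2x₁x₂+2x₂²)τ + 2(2x₁+x₂)z₁ + 2(x₁+2x₂)z₂))·σ_{A₂}(τ,z₁,z₂) for all x₁,x₂,y₁,y₂ ∈ ℤ; (iii) σ_{A₂} is holomorphic on ℍ×ℂ² and its Fourier expansion σ_{A₂}(τ,z) = Σ c(n,ℓ)·exp(2πi(nτ+ℓ₁z₁+ℓ₂z₂)) is supported on n ≥ 0 with 2n = ℓᵀS^{−1}ℓ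 = (2ℓ₁² − 2ℓ₁ℓ₂ + 2ℓ₂²)/3 whenever c(n,ℓ) ≠ 0 (singular weight). -/

import Mathlib

open Complex Matrix
open scoped Real BigOperators Classical

noncomputable section

abbrev SL2Z := Matrix.SpecialLinearGroup (Fin 2) ℤ

/-- The integral bilinear form attached to a Gram matrix `S`. -/
def bilinZ {ι : Type*} [Fintype ι] (S : Matrix ι ι ℤ) (x y : ι → ℤ) : ℤ :=
  ∑ i, ∑ j, x i * S i j * y j

def bilinQ {ι : Type*} [Fintype ι] (S : Matrix ι ι ℤ) (x y : ι → ℚ) : ℚ :=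
  ∑ i, ∑ j, x i * (S i j : ℚ) * y j

def bilinR {ι : Type*} [Fintype ι] (S : Matrix ι ι ℤ) (x y : ι → ℝ) : ℝ :=
  ∑ i, ∑ j, x i * (S i j : ℝ) * y j

def bilinC {ι : Type*} [Fintype ι] (S : Matrix ι ι ℤ) (x y : ι → ℂ) : ℂ :=
  ∑ i, ∑ j, x i * (S i j : ℂ) * y j

/-- `S` is the Gram matrix of an even positive definite lattice. -/
structure IsEvenPosDef {ι : Type*} [Fintype ι] (S : Matrix ι ι ℤ) : Prop where
  symm : S.IsSymm
  posdef : ∀ x : ι → ℚ, x ≠ 0 → 0 < bilinQ S x x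
  even_diag : ∀ i, (2 : ℤ) ∣ S i i

/-- `l ∈ (1/2) L^∨`, written in lattice coordinates:  `2(l,x) ∈ ℤ` for every lattice vector. -/
def InHalfDual {ι : Type*} [Fintype ι] (S : Matrix ι ι ℤ) (l : ι → ℚ) : Prop :=
  ∀ x : ι → ℤ, ∃ m : ℤ, 2 * bilinQ S l (fun i => (x i : ℚ)) = m

/-- `φ` is a holomorphic Jacobi form of weight `k` and index `t` for the lattice `(ℤ^ι, S)`
with `SL₂(ℤ)`-character (multiplier system) `χ`, Heisenberg character `ν`,
and Fourier coefficients `f`. -/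
structure IsJacobiForm {ι : Type*} [Fintype ι] (S : Matrix ι ι ℤ) (k t : ℚ)
    (χ : SL2Z → ℂ) (ν : (ι → ℤ) → (ι → ℤ) → ℂ)
    (f : ℚ × (ι → ℚ) → ℂ) (φ : ℂ → (ι → ℂ) → ℂ) : Prop where
  holo : DifferentiableOn ℂ (fun p : ℂ × (ι → ℂ) => φ p.1 p.2) {p | 0 < p.1.im}
  modular : ∀ A : SL2Z, ∀ τ : ℂ, 0 < τ.im → ∀ z : ι → ℂ,
    φ (((A.1 0 0 : ℂ) * τ + (A.1 0 1 : ℂ)) / ((A.1 1 0 : ℂ) * τ + (A.1 1 1 : ℂ)))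
        (fun i => z i / ((A.1 1 0 : ℂ) * τ + (A.1 1 1 : ℂ)))
      = χ A * ((A.1 1 0 : ℂ) * τ + (A.1 1 1 : ℂ)) ^ (k : ℂ)
        * Complex.exp ((π : ℂ) * I * (t : ℂ) * (A.1 1 0 : ℂ) * bilinC S z z
            / ((A.1 1 0 : ℂ) * τ + (A.1 1 1 : ℂ)))
        * φ τ z
  elliptic : ∀ x y : ι → ℤ, ∀ τ : ℂ, 0 < τ.im → ∀ z : ι → ℂ,
    φ τ (fun i => z i + (x i : ℂ) * τ + (y i : ℂ))
      = ν x y * Complex.exp (-((π : ℂ) * I * (t : ℂ))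
            * ((bilinZ S x x : ℂ) * τ + 2 * bilinC S (fun i => (x i : ℂ)) z))
        * φ τ z
  support : ∀ p : ℚ × (ι → ℚ), f p ≠ 0 →
    0 ≤ p.1 ∧ InHalfDual S p.2 ∧ 0 ≤ 2 * p.1 * t - bilinQ S p.2 p.2
  expansion : ∀ τ : ℂ, 0 < τ.im → ∀ z : ι → ℂ,
    HasSum (fun p : ℚ × (ι → ℚ) =>
        f p * Complex.exp (2 * (π : ℂ) * I *
          ((p.1 : ℂ) * τ + bilinC S (fun i => (p.2 i : ℂ)) z))) (φ τ z)

/-- The Fourier coefficients `f` are supported on indices of positive hyperbolic norm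
(cusp form condition). -/
def IsCuspSupport {ι : Type*} [Fintype ι] (S : Matrix ι ι ℤ) (t : ℚ)
    (f : ℚ × (ι → ℚ) → ℂ) : Prop :=
  ∀ p : ℚ × (ι → ℚ), f p ≠ 0 → 0 < 2 * p.1 * t - bilinQ S p.2 p.2

/-- `c` is a root of unity. -/
def HasFiniteOrder (c : ℂ) : Prop := ∃ N : ℕ, 0 < N ∧ c ^ N = 1

/-- The quadratic character mod 4. -/
def chi4 (n : ℤ) : ℂ := if n % 4 = 1 then 1 else if n % 4 = 3 then -1 else 0

/-- The classical Jacobi theta-series of characteristic `(1/2,1/2)`. -/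
def jtheta (τ z : ℂ) : ℂ :=
  ∑' n : ℤ, chi4 n *
    Complex.exp (2 * (π : ℂ) * I * (((n : ℂ) ^ 2 * τ) / 8 + (n : ℂ) * z / 2))

/-- The Dedekind eta function. -/
def dedekindEta (τ : ℂ) : ℂ :=
  Complex.exp ((π : ℂ) * I * τ / 12) *
    ∏' n : ℕ, (1 - Complex.exp (2 * (π : ℂ) * I * ((n : ℂ) + 1) * τ))

/-- `σ_{A₂}(τ,z₁,z₂) = θ(τ,z₁)θ(τ,z₂)θ(τ,z₁+z₂)/η(τ)`. -/
def sigmaA2 : ℂ → (Fin 2 → ℂ) → ℂ :=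
  fun τ z => jtheta τ (z 0) * jtheta τ (z 1) * jtheta τ (z 0 + z 1) / dedekindEta τ


lemma eta_eq (τ : ℂ) : dedekindEta τ = ModularForm.eta τ := by
  unfold dedekindEta ModularForm.eta
  congr 1
  · simp only [Function.Periodic.qParam]
    congr 1
    push_cast
    ring
  · refine tprod_congr fun n => ?_
    rw [ModularForm.eta_q_eq_cexp]

lemma prod_bound {r : ℝ} (h0 : 0 ≤ r) (h1 : r < 1) (k n : ℕ) {x : ℂ} (hx : ‖x‖ = r) :
    ‖∏ i ∈ Finset.range n, (1 - x ^ (k + i + 1))‖ ≤ Real.exp (1 / (1 - r)) := by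
  rw [norm_prod]
  calc ∏ i ∈ Finset.range n, ‖1 - x ^ (k + i + 1)‖
      ≤ ∏ i ∈ Finset.range n, Real.exp (r ^ i) := by
        refine Finset.prod_le_prod (fun _ _ => norm_nonneg _) fun i _ => ?_
        have a1 : ‖1 - x ^ (k + i + 1)‖ ≤ 1 + r ^ (k + i + 1) := by
          refine (norm_sub_le _ _).trans ?_
          simp [hx]
        have a2 : r ^ (k + i + 1) ≤ r ^ i := pow_le_pow_of_le_one h0 h1.le (by omega)
        have a3 := Real.add_one_le_exp (r ^ i)
        linarith
    _ = Real.exp (∑ i ∈ Finset.range n, r ^ i) := by rw [Real.exp_sum]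
    _ ≤ _ := by
        rw [Real.exp_le_exp, one_div, ← tsum_geometric_of_lt_one h0 h1]
        exact (summable_geometric_of_lt_one h0 h1).sum_le_tsum _ (fun i _ => by positivity)

lemma pent_term_bound {r : ℝ} (h0 : 0 ≤ r) (h1 : r < 1) (k n : ℕ) {x : ℂ} (hx : ‖x‖ = r) :
    ‖x ^ ((k + 1) * n) * ∏ i ∈ Finset.range (n + 1), (1 - x ^ (k + i + 1))‖
      ≤ r ^ n * Real.exp (1 / (1 - r)) := by
  rw [norm_mul]
  refine mul_le_mul ?_ (prod_bound h0 h1 k _ hx) (norm_nonneg _) (by positivity)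
  rw [norm_pow, hx]
  exact pow_le_pow_of_le_one h0 h1.le (by nlinarith)

lemma le_pentagonal_neg (k : ℕ) : k ≤ pentagonal (-(k:ℤ)) ∧ k ≤ pentagonal ((k:ℤ) + 1) := by
  have h1 := two_mul_natCast_pentagonal (-(k:ℤ))
  have h2 := two_mul_natCast_pentagonal ((k:ℤ)+1)
  constructor
  · zify; nlinarith
  · zify; nlinarith

lemma summable_pent {x : ℂ} (hx : ‖x‖ < 1) : Summable fun k : ℕ ↦
      (-1 : ℂ) ^ k * (x ^ pentagonal (-k) - x ^ pentagonal (k + 1)) := by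
  refine Summable.of_norm_bounded (g := fun k : ℕ => 2 * ‖x‖ ^ k)
    ((summable_geometric_of_lt_one (norm_nonneg _) hx).mul_left 2) fun k => ?_
  rw [norm_mul, norm_pow, norm_neg, norm_one, one_pow, one_mul]
  refine (norm_sub_le _ _).trans ?_
  rw [norm_pow, norm_pow]
  have a := pow_le_pow_of_le_one (norm_nonneg x) hx.le (le_pentagonal_neg k).1
  have b := pow_le_pow_of_le_one (norm_nonneg x) hx.le (le_pentagonal_neg k).2
  linarith

lemma pent_complex {x : ℂ} (hx : ‖x‖ < 1) :
    ∏' n : ℕ, (1 - x ^ (n + 1)) =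
      ∑' k : ℕ, (-1) ^ k * (x ^ pentagonal (-k) - x ^ pentagonal (k + 1)) := by
  have hg := summable_geometric_of_lt_one (norm_nonneg x) hx
  have hn := norm_nonneg x
  have hS : ∀ k, Summable
      (fun n ↦ x ^ ((k + 1) * n) * ∏ i ∈ Finset.range (n + 1), (1 - x ^ (k + i + 1))) := fun k =>
    Summable.of_norm_bounded (hg.mul_right _) fun n => pent_term_bound hn hx k n rfl
  refine Pentagonal.tprod_one_sub_pow ?_ hS ?_ (summable_pent hx) ?_
  · exact tendsto_pow_atTop_nhds_zero_of_norm_lt_one hx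
  · intro k
    apply multipliable_one_add_of_summable (f := fun n ↦ -x ^ (n + k + 1))
    simpa [add_assoc] using (summable_nat_add_iff (k + 1)).mpr hg
  · rw [tendsto_zero_iff_norm_tendsto_zero]
    have hlim : Filter.Tendsto (fun k : ℕ => ‖x‖ ^ k * ((∑' n, ‖x‖ ^ n) * Real.exp (1 / (1 - ‖x‖))))
        Filter.atTop (nhds 0) := by
      simpa using (tendsto_pow_atTop_nhds_zero_of_lt_one hn hx).mul_const
        ((∑' n, ‖x‖ ^ n) * Real.exp (1 / (1 - ‖x‖)))
    refine squeeze_zero (fun _ => norm_nonneg _) (fun k => ?_) hlim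
    rw [norm_mul, norm_mul, norm_pow, norm_neg, norm_one, one_pow, one_mul, norm_pow]
    refine mul_le_mul ?_ ?_ (norm_nonneg _) (by positivity)
    · refine pow_le_pow_of_le_one hn hx.le ?_
      rw [Nat.le_div_iff_mul_le (by norm_num)]
      nlinarith
    · rw [← tsum_mul_right]
      exact tsum_of_norm_bounded (hg.mul_right _).hasSum fun n => pent_term_bound hn hx k n rfl

/-- The general term of the theta series of `η`. -/
def etaTerm (τ : ℂ) (j : ℤ) : ℂ :=
  Complex.exp ((π : ℂ) * I * (j + (6 * (j : ℂ) + 1) ^ 2 * τ / 12))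

lemma exp_pi_int (k : ℤ) : Complex.exp ((π : ℂ) * I * k) = (-1 : ℂ) ^ k := by
  rw [mul_comm, Complex.exp_int_mul, Complex.exp_pi_mul_I]

lemma etaTerm_eq (τ : ℂ) (k : ℤ) : etaTerm τ (-k) = Complex.exp ((π : ℂ) * I * τ / 12) *
    ((-1) ^ k * (Complex.exp (2 * π * I * τ)) ^ pentagonal k) := by
  have h : ((2 * pentagonal k : ℤ) : ℂ) = ((k * (3 * k - 1) : ℤ) : ℂ) := by
    rw [two_mul_natCast_pentagonal k]
  push_cast at h
  rw [← exp_pi_int, ← Complex.exp_nat_mul, ← Complex.exp_add, ← Complex.exp_add, etaTerm,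
    Complex.exp_eq_exp_iff_exists_int]
  refine ⟨-k, ?_⟩
  push_cast
  linear_combination (-(π : ℂ) * I * τ) * h

lemma norm_q_lt {τ : ℂ} (hτ : 0 < τ.im) : ‖Complex.exp (2 * π * I * τ)‖ < 1 :=
  UpperHalfPlane.norm_exp_two_pi_I_lt_one ⟨τ, hτ⟩

lemma summable_etaTerm {τ : ℂ} (hτ : 0 < τ.im) : Summable (etaTerm τ) := by
  have h := (summable_jacobiTheta₂_term_iff (τ / 2 + 1 / 2) (3 * τ)).2 (by simpa using hτ)
  refine (h.mul_left (Complex.exp ((π : ℂ) * I * τ / 12))).congr fun j => ?_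
  rw [etaTerm, jacobiTheta₂_term, ← Complex.exp_add]
  congr 1
  ring

lemma hasSum_eta {τ : ℂ} (hτ : 0 < τ.im) : HasSum (etaTerm τ) (dedekindEta τ) := by
  have hs := summable_etaTerm hτ
  have h1 : HasSum (fun k : ℤ => etaTerm τ (-k)) (∑' j, etaTerm τ j) :=
    (Equiv.neg ℤ).hasSum_iff.2 hs.hasSum
  have h2 : HasSum (fun k : ℤ => etaTerm τ k) (∑' j, etaTerm τ j) := hs.hasSum
  have h3 := h2.nat_add_neg_add_one
  have h4 := (summable_pent (norm_q_lt hτ)).hasSum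
  rw [← pent_complex (norm_q_lt hτ)] at h4
  have h5 := h4.mul_left (Complex.exp ((π : ℂ) * I * τ / 12))
  have h6 : dedekindEta τ = Complex.exp ((π : ℂ) * I * τ / 12) *
      ∏' n : ℕ, (1 - Complex.exp (2 * π * I * τ) ^ (n + 1)) := by
    unfold dedekindEta
    congr 1
    refine tprod_congr fun n => ?_
    rw [← Complex.exp_nat_mul]
    congr 2
    push_cast
    ring
  rw [← h6] at h5
  have h7 : dedekindEta τ = ∑' j, etaTerm τ j := by
    refine h5.unique (h3.congr_fun ?_)
    intro k
    have e1 := etaTerm_eq τ (-(k:ℤ))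
    have e2 := etaTerm_eq τ ((k:ℤ) + 1)
    rw [neg_neg] at e1
    have s1 : (-1 : ℂ) ^ (-(k:ℤ)) = (-1) ^ k := by
      rw [_root_.zpow_neg, zpow_natCast, ← inv_pow]; norm_num
    have s2 : (-1 : ℂ) ^ ((k:ℤ) + 1) = -(-1) ^ k := by
      rw [zpow_add₀ (by norm_num), zpow_natCast]; norm_num
    rw [s1] at e1
    rw [s2] at e2
    rw [e1, e2]
    ring
  rw [h7]
  exact hs.hasSum

/-- The general term of the theta series, indexed by `n = 2m+1`. -/
def thTerm (τ z : ℂ) (m : ℤ) : ℂ :=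
  Complex.exp ((π : ℂ) * I * (m + (2 * (m : ℂ) + 1) ^ 2 * τ / 4 + (2 * (m : ℂ) + 1) * z))

lemma chi4_odd (m : ℤ) : chi4 (2 * m + 1) = Complex.exp ((π : ℂ) * I * m) := by
  rw [exp_pi_int]
  rcases Int.even_or_odd' m with ⟨k, rfl | rfl⟩
  · rw [Even.neg_one_zpow (by simp), chi4, if_pos (by omega)]
  · rw [Odd.neg_one_zpow (by simp), chi4, if_neg (by omega), if_pos (by omega)]

lemma jtheta_eq_tsum (τ z : ℂ) : jtheta τ z = ∑' m : ℤ, thTerm τ z m := by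
  have hinj : Function.Injective (fun m : ℤ => 2 * m + 1) := fun a b h => by
    simp only at h; omega
  unfold jtheta
  rw [← hinj.tsum_eq]
  · refine tsum_congr fun m => ?_
    rw [chi4_odd, ← Complex.exp_add, thTerm]
    congr 1
    push_cast
    ring
  · intro n hn
    rw [Function.mem_support] at hn
    have : chi4 n ≠ 0 := left_ne_zero_of_mul hn
    unfold chi4 at this
    refine ⟨(n - 1) / 2, ?_⟩
    simp only
    split_ifs at this <;> first | omega | exact absurd rfl this

lemma thTerm_eq (τ z : ℂ) (m : ℤ) : thTerm τ z m = Complex.exp ((π : ℂ) * I * (τ / 4 + z)) *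
    jacobiTheta₂_term m (z + τ / 2 + 1 / 2) τ := by
  rw [thTerm, jacobiTheta₂_term, ← Complex.exp_add]
  congr 1
  ring

lemma jtheta_eq (τ z : ℂ) : jtheta τ z = Complex.exp ((π : ℂ) * I * (τ / 4 + z)) *
    jacobiTheta₂ (z + τ / 2 + 1 / 2) τ := by
  rw [jtheta_eq_tsum, jacobiTheta₂, ← tsum_mul_left]
  exact tsum_congr (thTerm_eq τ z)

lemma summable_thTerm {τ : ℂ} (hτ : 0 < τ.im) (z : ℂ) : Summable (thTerm τ z) :=
  (((summable_jacobiTheta₂_term_iff _ τ).2 hτ).mul_left _).congr fun m => (thTerm_eq τ z m).symm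

lemma hasSum_jtheta {τ : ℂ} (hτ : 0 < τ.im) (z : ℂ) : HasSum (thTerm τ z) (jtheta τ z) := by
  rw [jtheta_eq_tsum]
  exact (summable_thTerm hτ z).hasSum

lemma jtheta_T (τ z : ℂ) : jtheta (τ + 1) z = Complex.exp ((π : ℂ) * I / 4) * jtheta τ z := by
  rw [jtheta_eq_tsum, jtheta_eq_tsum, ← tsum_mul_left]
  refine tsum_congr fun m => ?_
  rw [thTerm, thTerm, ← Complex.exp_add, Complex.exp_eq_exp_iff_exists_int]
  obtain ⟨k, hk⟩ := Int.even_mul_succ_self m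
  refine ⟨k, ?_⟩
  have : (m : ℂ) * (m + 1) = k + k := by exact_mod_cast hk
  linear_combination ((π : ℂ) * I) * this

lemma jtheta_shift (τ z : ℂ) (x y : ℤ) : jtheta τ (z + x * τ + y) =
    (-1) ^ (x + y) * Complex.exp (-((π : ℂ) * I) * (x ^ 2 * τ + 2 * x * z)) * jtheta τ z := by
  rw [jtheta_eq_tsum, jtheta_eq_tsum, ← tsum_mul_left, ← (Equiv.addRight x).tsum_eq (fun i => _ * thTerm τ z i)]
  refine tsum_congr fun m => ?_
  rw [thTerm, thTerm, ← exp_pi_int, ← Complex.exp_add, ← Complex.exp_add,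
    Complex.exp_eq_exp_iff_exists_int]
  refine ⟨m * y - x, ?_⟩
  simp only [Equiv.coe_addRight]
  push_cast
  ring

lemma jtheta_S {τ : ℂ} (hτ : 0 < τ.im) (z : ℂ) : jtheta (-1 / τ) (z / τ) =
    -I * (-I * τ) ^ (1 / 2 : ℂ) * Complex.exp ((π : ℂ) * I * z ^ 2 / τ) * jtheta τ z := by
  have h0 : τ ≠ 0 := by rintro rfl; simp at hτ
  have hs : (-I * τ) ^ (1 / 2 : ℂ) ≠ 0 := by
    rw [Ne, Complex.cpow_eq_zero_iff]
    simp [h0]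
  rw [jtheta_eq, jtheta_eq, jacobiTheta₂_functional_equation (z + τ / 2 + 1 / 2) τ]
  have h1 := jacobiTheta₂_add_left' ((z + τ / 2 + 1 / 2) / τ) (-1 / τ)
  have h2 : (z + τ / 2 + 1 / 2) / τ + -1 / τ = z / τ + -1 / τ / 2 + 1 / 2 := by
    field_simp
    ring
  rw [h2] at h1
  rw [h1]
  set J := jacobiTheta₂ ((z + τ / 2 + 1 / 2) / τ) (-1 / τ)
  have h3 : -I = Complex.exp (-((π : ℂ) / 2 * I)) := by
    rw [Complex.exp_neg, Complex.exp_pi_div_two_mul_I, Complex.inv_I]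
  have h4 : Complex.exp (↑π * I * (-1 / τ / 4 + z / τ)) *
      Complex.exp (-↑π * I * (-1 / τ + 2 * ((z + τ / 2 + 1 / 2) / τ))) =
      -I * (Complex.exp (↑π * I * z ^ 2 / τ) * Complex.exp (↑π * I * (τ / 4 + z)) *
        Complex.exp (-↑π * I * (z + τ / 2 + 1 / 2) ^ 2 / τ)) := by
    rw [h3]
    simp only [← Complex.exp_add]
    congr 1
    field_simp
    ring
  rw [← mul_assoc, h4]
  field_simp

lemma eta_T (τ : ℂ) : dedekindEta (τ + 1) = Complex.exp ((π : ℂ) * I / 12) * dedekindEta τ := by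
  unfold dedekindEta
  rw [← mul_assoc, ← Complex.exp_add]
  congr 2
  · ring
  · ext n
    congr 1
    rw [Complex.exp_eq_exp_iff_exists_int]
    refine ⟨n + 1, ?_⟩
    push_cast
    ring

lemma eta_S {τ : ℂ} (hτ : 0 < τ.im) :
    dedekindEta (-1 / τ) = (-I * τ) ^ (1 / 2 : ℂ) * dedekindEta τ := by
  have h0 : τ ≠ 0 := by rintro rfl; simp at hτ
  have h : ModularForm.eta (-1 / τ) = (sqrt I)⁻¹ * (sqrt τ * ModularForm.eta τ) := by
    simpa using ModularForm.eta_comp_eq_csqrt_I_inv (show τ ∈ UpperHalfPlane.upperHalfPlaneSet from hτ)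
  rw [eta_eq, eta_eq, h, ← mul_assoc]
  congr 1
  rw [sqrt_eq_exp I_ne_zero, sqrt_eq_exp h0, Complex.cpow_def_of_ne_zero (by simp [h0]),
    ← Complex.exp_neg, ← Complex.exp_add]
  congr 1
  have hl : Complex.log (-I * τ) = Complex.log (-I) + Complex.log τ := by
    rw [Complex.log_mul_eq_add_log_iff (by simp) h0, Complex.arg_neg_I]
    have a1 := Complex.arg_nonneg_iff.2 hτ.le
    have a2 := Complex.arg_le_pi τ
    have := Real.pi_pos
    constructor <;> linarith
  rw [hl, Complex.log_neg_I, Complex.log_I]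
  ring

lemma eta_ne {τ : ℂ} (hτ : 0 < τ.im) : dedekindEta τ ≠ 0 := by
  rw [eta_eq]
  exact ModularForm.eta_ne_zero hτ

lemma differentiableAt_jtheta {τ : ℂ} (hτ : 0 < τ.im) (z : ℂ) :
    DifferentiableAt ℂ (fun p : ℂ × ℂ => jtheta p.1 p.2) (τ, z) := by
  simp only [jtheta_eq]
  refine DifferentiableAt.mul (by fun_prop) ?_
  exact DifferentiableAt.comp (τ, z) (g := fun p : ℂ × ℂ ↦ jacobiTheta₂ p.1 p.2)
    (f := fun p : ℂ × ℂ => (p.2 + p.1 / 2 + 1 / 2, p.1))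
    (hasFDerivAt_jacobiTheta₂ (z + τ / 2 + 1 / 2) hτ).differentiableAt (by fun_prop)

lemma differentiableAt_eta {τ : ℂ} (hτ : 0 < τ.im) : DifferentiableAt ℂ dedekindEta τ := by
  rw [show dedekindEta = ModularForm.eta from funext eta_eq]
  exact ModularForm.differentiableAt_eta_of_mem_upperHalfPlaneSet hτ

lemma diff_comp {E : Type*} [NormedAddCommGroup E] [NormedSpace ℂ E] (p : E) (t u : E → ℂ)
    (hp : 0 < (t p).im) (ht : DifferentiableAt ℂ t p)
    (hu : DifferentiableAt ℂ u p) : DifferentiableAt ℂ (fun p => jtheta (t p) (u p)) p :=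
  DifferentiableAt.comp (𝕜 := ℂ) p (g := fun p : ℂ × ℂ => jtheta p.1 p.2) (f := fun p => (t p, u p))
    (differentiableAt_jtheta hp (u p)) (ht.prodMk hu)

lemma diff_sigma {E : Type*} [NormedAddCommGroup E] [NormedSpace ℂ E] (p : E) (t u v : E → ℂ)
    (hp : 0 < (t p).im) (ht : DifferentiableAt ℂ t p)
    (hu : DifferentiableAt ℂ u p) (hv : DifferentiableAt ℂ v p) :
    DifferentiableAt ℂ (fun p => jtheta (t p) (u p) * jtheta (t p) (v p) *
      jtheta (t p) (u p + v p) / dedekindEta (t p)) p := by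
  have k0 := diff_comp p t u hp ht hu
  have k1 := diff_comp p t v hp ht hv
  have k2 := diff_comp p t (fun p => u p + v p) hp ht (hu.fun_add hv)
  have k3 : DifferentiableAt ℂ (fun p => dedekindEta (t p)) p :=
    DifferentiableAt.comp (𝕜 := ℂ) p (g := dedekindEta) (f := t) (differentiableAt_eta hp) ht
  simp only [div_eq_mul_inv]
  exact DifferentiableAt.fun_mul ((k0.fun_mul k1).fun_mul k2)
    (DifferentiableAt.inv (h := fun p => dedekindEta (t p)) k3 (eta_ne hp))

lemma sigma_holo :
    DifferentiableOn ℂ (fun p : ℂ × (Fin 2 → ℂ) => sigmaA2 p.1 p.2) {p | 0 < p.1.im} := by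
  intro p hp
  apply DifferentiableAt.differentiableWithinAt
  have h0 : DifferentiableAt ℂ (fun p : ℂ × (Fin 2 → ℂ) => p.1) p := by fun_prop
  have h1 : DifferentiableAt ℂ (fun p : ℂ × (Fin 2 → ℂ) => p.2 0) p := by fun_prop
  have h2 : DifferentiableAt ℂ (fun p : ℂ × (Fin 2 → ℂ) => p.2 1) p := by fun_prop
  exact diff_sigma (E := ℂ × (Fin 2 → ℂ)) p _ _ _ hp h0 h1 h2

/-- `θθθ/η⁹`: weight `-3`, trivial character. -/
def NN (τ z w : ℂ) : ℂ := jtheta τ z * jtheta τ w * jtheta τ (z + w) / dedekindEta τ ^ 9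

/-- Modularity of `NN` under a single matrix. -/
def PP (A : SL2Z) : Prop := ∀ τ : ℂ, 0 < τ.im → ∀ z w : ℂ,
  NN (((A.1 0 0 : ℂ) * τ + (A.1 0 1 : ℂ)) / ((A.1 1 0 : ℂ) * τ + (A.1 1 1 : ℂ)))
    (z / ((A.1 1 0 : ℂ) * τ + (A.1 1 1 : ℂ))) (w / ((A.1 1 0 : ℂ) * τ + (A.1 1 1 : ℂ)))
    * ((A.1 1 0 : ℂ) * τ + (A.1 1 1 : ℂ)) ^ 3 =
  Complex.exp ((π : ℂ) * I * (A.1 1 0 : ℂ) * (2 * z ^ 2 + 2 * z * w + 2 * w ^ 2) /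
    ((A.1 1 0 : ℂ) * τ + (A.1 1 1 : ℂ))) * NN τ z w

lemma det_c (A : SL2Z) : (A.1 0 0 : ℂ) * A.1 1 1 - A.1 0 1 * A.1 1 0 = 1 := by
  have := A.2
  rw [Matrix.det_fin_two] at this
  exact_mod_cast this

lemma mob (A : SL2Z) {τ : ℂ} (hτ : 0 < τ.im) :
    ((A.1 1 0 : ℂ) * τ + (A.1 1 1 : ℂ)) ≠ 0 ∧
    0 < (((A.1 0 0 : ℂ) * τ + (A.1 0 1 : ℂ)) / ((A.1 1 0 : ℂ) * τ + (A.1 1 1 : ℂ))).im := by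
  have h1 := UpperHalfPlane.specialLinearGroup_apply A ⟨τ, hτ⟩
  have h2 := (A • (⟨τ, hτ⟩ : UpperHalfPlane)).2
  have h3 : ((A • (⟨τ, hτ⟩ : UpperHalfPlane) : UpperHalfPlane) : ℂ) =
    ((A.1 0 0 : ℂ) * τ + (A.1 0 1 : ℂ)) / ((A.1 1 0 : ℂ) * τ + (A.1 1 1 : ℂ)) := by
    rw [h1]; simp
  have h4 : 0 < (((A.1 0 0 : ℂ) * τ + (A.1 0 1 : ℂ)) / ((A.1 1 0 : ℂ) * τ + (A.1 1 1 : ℂ))).im := by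
    rw [← h3]; exact h2
  refine ⟨fun h0 => ?_, h4⟩
  rw [h0] at h4
  simp at h4

lemma PP_mul {A B : SL2Z} (hA : PP A) (hB : PP B) : PP (A * B) := by
  intro τ hτ z w
  obtain ⟨hJ, hτ'⟩ := mob B hτ
  obtain ⟨hJ', -⟩ := mob A hτ'
  have h1 := hA _ hτ' (z / ((B.1 1 0 : ℂ) * τ + (B.1 1 1 : ℂ))) (w / ((B.1 1 0 : ℂ) * τ + (B.1 1 1 : ℂ)))
  have h2 := hB τ hτ z w
  have e00 : ((A * B).1 0 0 : ℂ) = A.1 0 0 * B.1 0 0 + A.1 0 1 * B.1 1 0 := by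
    simp [Matrix.mul_apply, Fin.sum_univ_two]
  have e01 : ((A * B).1 0 1 : ℂ) = A.1 0 0 * B.1 0 1 + A.1 0 1 * B.1 1 1 := by
    simp [Matrix.mul_apply, Fin.sum_univ_two]
  have e10 : ((A * B).1 1 0 : ℂ) = A.1 1 0 * B.1 0 0 + A.1 1 1 * B.1 1 0 := by
    simp [Matrix.mul_apply, Fin.sum_univ_two]
  have e11 : ((A * B).1 1 1 : ℂ) = A.1 1 0 * B.1 0 1 + A.1 1 1 * B.1 1 1 := by
    simp [Matrix.mul_apply, Fin.sum_univ_two]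
  rw [e00, e01, e10, e11]
  have hdet := det_c B
  generalize (A.1 0 0 : ℂ) = a at *
  generalize (A.1 0 1 : ℂ) = b at *
  generalize (A.1 1 0 : ℂ) = c at *
  generalize (A.1 1 1 : ℂ) = d at *
  generalize (B.1 0 0 : ℂ) = a' at *
  generalize (B.1 0 1 : ℂ) = b' at *
  generalize (B.1 1 0 : ℂ) = c' at *
  generalize (B.1 1 1 : ℂ) = d' at *
  set j := c' * τ + d' with hj
  set k := c * ((a' * τ + b') / j) + d with hk
  have k1 : k * j = (c * a' + d * c') * τ + (c * b' + d * d') := by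
    rw [hk]; field_simp; rw [hj]; ring
  have k2 : (a * ((a' * τ + b') / j) + b) * j = (a * a' + b * c') * τ + (a * b' + b * d') := by
    field_simp; rw [hj]; ring
  have k3 : c + c' * (k * j) = (c * a' + d * c') * j := by
    rw [k1, hj]
    linear_combination (-c) * hdet
  rw [← k1, ← k2, mul_div_mul_right _ _ hJ, div_mul_eq_div_div_swap z, div_mul_eq_div_div_swap w,
    mul_pow, ← mul_assoc, h1, mul_assoc, h2, ← mul_assoc, ← Complex.exp_add]
  congr 2
  field_simp
  linear_combination (z ^ 2 + z * w + w ^ 2) * k3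

lemma PP_one : PP 1 := by
  intro τ hτ z w
  simp

lemma PP_T : PP ModularGroup.T := by
  intro τ hτ z w
  have hη := eta_ne hτ
  simp only [ModularGroup.T, Matrix.of_apply, Matrix.cons_val', Matrix.cons_val_zero,
    Matrix.cons_val_one, Matrix.cons_val_fin_one]
  simp only [Int.cast_one, Int.cast_zero, one_mul, zero_mul, zero_add, div_one, mul_zero,
    Complex.exp_zero, one_pow, mul_one, NN, jtheta_T, eta_T]
  have : Complex.exp ((π : ℂ) * I / 4) = Complex.exp ((π : ℂ) * I / 12) ^ 3 := by
    rw [← Complex.exp_nat_mul]; congr 1; push_cast; ring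
  rw [this]
  have := Complex.exp_ne_zero ((π : ℂ) * I / 12)
  field_simp

lemma PP_Tinv : PP ModularGroup.T⁻¹ := by
  intro τ hτ z w
  have h := PP_T (τ - 1) (by simpa using hτ) z w
  simp only [ModularGroup.T, Matrix.of_apply, Matrix.cons_val', Matrix.cons_val_zero,
    Matrix.cons_val_one, Matrix.cons_val_fin_one] at h
  simp at h
  simp [h, ← sub_eq_add_neg]

lemma PP_S : PP ModularGroup.S := by
  intro τ hτ z w
  have hη := eta_ne hτ
  have h0 : τ ≠ 0 := by rintro rfl; simp at hτ
  have hs : (-I * τ) ^ (1 / 2 : ℂ) ≠ 0 := by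
    rw [Ne, Complex.cpow_eq_zero_iff]
    simp [h0]
  have hs2 : ((-I * τ) ^ (1 / 2 : ℂ)) ^ 2 = -I * τ := by
    rw [← Complex.cpow_nat_mul]; norm_num
  simp only [ModularGroup.S, Matrix.of_apply, Matrix.cons_val', Matrix.cons_val_zero,
    Matrix.cons_val_one, Matrix.cons_val_fin_one]
  simp only [Int.cast_one, Int.cast_zero, one_mul, zero_mul, zero_add, add_zero, Int.cast_neg,
    mul_one, NN, ← add_div, jtheta_S hτ, eta_S hτ]
  have he : Complex.exp ((π : ℂ) * I * (2 * z ^ 2 + 2 * z * w + 2 * w ^ 2) / τ) =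
      Complex.exp ((π : ℂ) * I * z ^ 2 / τ) * Complex.exp ((π : ℂ) * I * w ^ 2 / τ) *
      Complex.exp ((π : ℂ) * I * (z + w) ^ 2 / τ) := by
    simp only [← Complex.exp_add]
    congr 1
    ring
  rw [he]
  generalize (-I * τ) ^ (1 / 2 : ℂ) = s at *
  have hs6 : s ^ 6 = (-I * τ) ^ 3 := by rw [← hs2]; ring
  have hI3 : I ^ 3 = -I := by rw [pow_succ, I_sq]; ring
  have hs6' : s ^ 6 = I * τ ^ 3 := by rw [hs6]; linear_combination (-τ ^ 3) * hI3
  field_simp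
  rw [hs6']
  linear_combination (-τ ^ 3 * jtheta τ z * jtheta τ w * jtheta τ (z + w)) * hI3

lemma PP_all (A : SL2Z) : PP A := by
  have hA : A ∈ Subgroup.closure {ModularGroup.S, ModularGroup.T} := by
    rw [SpecialLinearGroup.SL2Z_generators]; trivial
  have hSi : PP ModularGroup.S⁻¹ := by
    have : ModularGroup.S⁻¹ = ModularGroup.S * (ModularGroup.S * ModularGroup.S) := by
      apply Subtype.ext
      simp [ModularGroup.coe_S, Matrix.SpecialLinearGroup.coe_inv, Matrix.adjugate_fin_two]
    rw [this]
    exact PP_mul PP_S (PP_mul PP_S PP_S)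
  induction hA using Subgroup.closure_induction_left with
  | one => exact PP_one
  | mul_left x hx y hy ih =>
    rcases hx with rfl | rfl
    · exact PP_mul PP_S ih
    · exact PP_mul PP_T ih
  | inv_mul_cancel x hx y hy ih =>
    rcases hx with rfl | rfl
    · exact PP_mul hSi ih
    · exact PP_mul PP_Tinv ih

lemma bilinC_A2 (x z : Fin 2 → ℂ) : bilinC !![2, 1; 1, 2] x z =
    2 * x 0 * z 0 + x 0 * z 1 + x 1 * z 0 + 2 * x 1 * z 1 := by
  simp [bilinC, Fin.sum_univ_two]
  ring

lemma bilinQ_A2 (x z : Fin 2 → ℚ) : bilinQ !![2, 1; 1, 2] x z =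
    2 * x 0 * z 0 + x 0 * z 1 + x 1 * z 0 + 2 * x 1 * z 1 := by
  simp [bilinQ, Fin.sum_univ_two]
  ring

lemma bilinZ_A2 (x z : Fin 2 → ℤ) : bilinZ !![2, 1; 1, 2] x z =
    2 * x 0 * z 0 + x 0 * z 1 + x 1 * z 0 + 2 * x 1 * z 1 := by
  simp [bilinZ, Fin.sum_univ_two]
  ring

lemma sigma_elliptic (x y : Fin 2 → ℤ) (τ : ℂ) (z : Fin 2 → ℂ) :
    sigmaA2 τ (fun i => z i + (x i : ℂ) * τ + (y i : ℂ))
      = Complex.exp (-((π : ℂ) * I)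
            * ((bilinZ !![2, 1; 1, 2] x x : ℂ) * τ + 2 * bilinC !![2, 1; 1, 2] (fun i => (x i : ℂ)) z))
        * sigmaA2 τ z := by
  rw [bilinC_A2, bilinZ_A2]
  simp only [sigmaA2]
  have h : z 0 + (x 0 : ℂ) * τ + (y 0 : ℂ) + (z 1 + (x 1 : ℂ) * τ + (y 1 : ℂ)) =
    (z 0 + z 1) + ((x 0 + x 1 : ℤ) : ℂ) * τ + ((y 0 + y 1 : ℤ) : ℂ) := by push_cast; ring
  rw [h, jtheta_shift, jtheta_shift, jtheta_shift]
  have hs : (-1 : ℂ) ^ (x 0 + y 0) * (-1 : ℂ) ^ (x 1 + y 1) *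
      (-1 : ℂ) ^ ((x 0 + x 1) + (y 0 + y 1)) = 1 := by
    rw [← zpow_add₀ (by norm_num), ← zpow_add₀ (by norm_num)]
    exact Even.neg_one_zpow ⟨x 0 + x 1 + y 0 + y 1, by ring⟩
  have he : Complex.exp (-((π : ℂ) * I) * ((x 0 : ℂ) ^ 2 * τ + 2 * (x 0 : ℂ) * z 0)) *
      Complex.exp (-((π : ℂ) * I) * ((x 1 : ℂ) ^ 2 * τ + 2 * (x 1 : ℂ) * z 1)) *
      Complex.exp (-((π : ℂ) * I) * (((x 0 + x 1 : ℤ) : ℂ) ^ 2 * τ +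
        2 * ((x 0 + x 1 : ℤ) : ℂ) * (z 0 + z 1))) =
      Complex.exp (-((π : ℂ) * I) * (((2 * x 0 * x 0 + x 0 * x 1 + x 1 * x 0 + 2 * x 1 * x 1 : ℤ) : ℂ) * τ
        + 2 * (2 * (x 0 : ℂ) * z 0 + (x 0 : ℂ) * z 1 + (x 1 : ℂ) * z 0 + 2 * (x 1 : ℂ) * z 1))) := by
    rw [← Complex.exp_add, ← Complex.exp_add]
    congr 1
    push_cast
    ring
  rw [← he]
  linear_combination (Complex.exp (-((π : ℂ) * I) * ((x 0 : ℂ) ^ 2 * τ + 2 * (x 0 : ℂ) * z 0)) *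
      Complex.exp (-((π : ℂ) * I) * ((x 1 : ℂ) ^ 2 * τ + 2 * (x 1 : ℂ) * z 1)) *
      Complex.exp (-((π : ℂ) * I) * (((x 0 + x 1 : ℤ) : ℂ) ^ 2 * τ +
        2 * ((x 0 + x 1 : ℤ) : ℂ) * (z 0 + z 1))) *
      (jtheta τ (z 0) * jtheta τ (z 1) * jtheta τ (z 0 + z 1) / dedekindEta τ)) * hs

lemma sigma_modular (vη8 : SL2Z → ℂ)
    (hvη8 : ∀ A : SL2Z, ∀ τ : ℂ, 0 < τ.im →
      dedekindEta (((A.1 0 0 : ℂ) * τ + (A.1 0 1 : ℂ)) / ((A.1 1 0 : ℂ) * τ + (A.1 1 1 : ℂ))) ^ 8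
        = vη8 A * ((A.1 1 0 : ℂ) * τ + (A.1 1 1 : ℂ)) ^ 4 * dedekindEta τ ^ 8)
    (A : SL2Z) (τ : ℂ) (hτ : 0 < τ.im) (z : Fin 2 → ℂ) :
    sigmaA2 (((A.1 0 0 : ℂ) * τ + (A.1 0 1 : ℂ)) / ((A.1 1 0 : ℂ) * τ + (A.1 1 1 : ℂ)))
        (fun i => z i / ((A.1 1 0 : ℂ) * τ + (A.1 1 1 : ℂ)))
      = vη8 A * ((A.1 1 0 : ℂ) * τ + (A.1 1 1 : ℂ))
        * Complex.exp ((π : ℂ) * I * (A.1 1 0 : ℂ) * bilinC !![2, 1; 1, 2] z z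
            / ((A.1 1 0 : ℂ) * τ + (A.1 1 1 : ℂ)))
        * sigmaA2 τ z := by
  have h1 := PP_all A τ hτ (z 0) (z 1)
  have h2 := hvη8 A τ hτ
  obtain ⟨hJ, hτ'⟩ := mob A hτ
  have key : ∀ (t u v : ℂ), 0 < t.im → jtheta t u * jtheta t v * jtheta t (u + v) / dedekindEta t =
      dedekindEta t ^ 8 * NN t u v := by
    intro t u v ht
    have := eta_ne ht
    unfold NN
    field_simp
  simp only [sigmaA2]
  rw [key _ _ _ hτ', key _ _ _ hτ, h2, bilinC_A2]
  have hb : 2 * z 0 * z 0 + z 0 * z 1 + z 1 * z 0 + 2 * z 1 * z 1 =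
    2 * z 0 ^ 2 + 2 * z 0 * z 1 + 2 * z 1 ^ 2 := by ring
  rw [hb]
  linear_combination (vη8 A * ((A.1 1 0 : ℂ) * τ + (A.1 1 1 : ℂ)) * dedekindEta τ ^ 8) * h1

/-- Reindexing of triples. -/
def tripleEquiv : (ℤ × ℤ) × ℤ ≃ (ℤ × ℤ) × ℤ where
  toFun p := ((p.1.1 - 1 - p.2, p.1.2 - 1 - p.2), p.2)
  invFun p := ((p.1.1 + 1 + p.2, p.1.2 + 1 + p.2), p.2)
  left_inv p := by
    refine Prod.ext (Prod.ext ?_ ?_) rfl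
    · show p.1.1 - 1 - p.2 + 1 + p.2 = p.1.1
      ring
    · show p.1.2 - 1 - p.2 + 1 + p.2 = p.1.2
      ring
  right_inv p := by
    refine Prod.ext (Prod.ext ?_ ?_) rfl
    · show p.1.1 + 1 + p.2 - 1 - p.2 = p.1.1
      ring
    · show p.1.2 + 1 + p.2 - 1 - p.2 = p.1.2
      ring

/-- Fourier coefficients. -/
def coefA2 (l : ℤ × ℤ) : ℂ :=
  if (l.1 + l.2) % 3 = 0 then 0 else if (l.1 + l.2) % 3 = 1 then -1 else 1

/-- The Fourier exponential attached to `l`. -/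
def expA2 (τ z w : ℂ) (l : ℤ × ℤ) : ℂ :=
  Complex.exp (2 * (π : ℂ) * I * (((l.1 : ℂ) ^ 2 - l.1 * l.2 + (l.2 : ℂ) ^ 2) / 3 * τ
    + l.1 * z + l.2 * w))

lemma triple_term (τ z w : ℂ) (l : ℤ × ℤ) (m : ℤ) :
    thTerm τ z (l.1 - 1 - m) * thTerm τ w (l.2 - 1 - m) * thTerm τ (z + w) m =
    expA2 τ z w l * Complex.exp ((π : ℂ) * I * ((m + (l.1 + l.2 : ℤ) : ℤ) +
      (6 * (m : ℂ) + 3 - 2 * (l.1 + l.2 : ℤ)) ^ 2 * τ / 12)) := by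
  rw [thTerm, thTerm, thTerm, expA2, ← Complex.exp_add, ← Complex.exp_add, ← Complex.exp_add,
    Complex.exp_eq_exp_iff_exists_int]
  refine ⟨-1 - m, ?_⟩
  push_cast
  ring

lemma fiber_tsum {τ : ℂ} (hτ : 0 < τ.im) (l : ℤ × ℤ) :
    ∑' m : ℤ, Complex.exp ((π : ℂ) * I * ((m + (l.1 + l.2 : ℤ) : ℤ) +
      (6 * (m : ℂ) + 3 - 2 * (l.1 + l.2 : ℤ)) ^ 2 * τ / 12)) = coefA2 l * dedekindEta τ := by
  unfold coefA2
  generalize l.1 + l.2 = s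
  have hη := (hasSum_eta hτ).tsum_eq
  have hneg : ∀ x : ℂ, -Complex.exp x = Complex.exp (x + π * I) := fun x => by
    rw [Complex.exp_add, Complex.exp_pi_mul_I]; ring
  have hcase : (∃ k, s = 3 * k) ∨ (∃ k, s = 3 * k + 1) ∨ (∃ k, s = 3 * k + 2) := by
    have : s % 3 = 0 ∨ s % 3 = 1 ∨ s % 3 = 2 := by omega
    rcases this with h | h | h
    · exact Or.inl ⟨s / 3, by omega⟩
    · exact Or.inr (Or.inl ⟨s / 3, by omega⟩)
    · exact Or.inr (Or.inr ⟨s / 3, by omega⟩)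
  rcases hcase with ⟨k, rfl⟩ | ⟨k, rfl⟩ | ⟨k, rfl⟩
  · rw [if_pos (by omega), zero_mul]
    have key : ∀ x : ℂ, x = -x → x = 0 := fun x h => by linear_combination h / 2
    apply key
    conv_lhs => rw [← (Equiv.subLeft (2 * k - 1)).tsum_eq]
    rw [← tsum_neg]
    refine tsum_congr fun m => ?_
    rw [hneg, Complex.exp_eq_exp_iff_exists_int]
    refine ⟨k - m - 1, ?_⟩
    simp only [Equiv.subLeft_apply]
    push_cast
    ring
  · rw [if_neg (by omega), if_pos (by omega), neg_one_mul, ← hη,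
      ← (Equiv.subRight k).tsum_eq (etaTerm τ), ← tsum_neg]
    refine tsum_congr fun m => ?_
    rw [etaTerm, hneg, Complex.exp_eq_exp_iff_exists_int]
    refine ⟨2 * k, ?_⟩
    simp only [Equiv.subRight_apply]
    push_cast
    ring
  · rw [if_neg (by omega), if_neg (by omega), one_mul, ← hη,
      ← (Equiv.subLeft k).tsum_eq (etaTerm τ)]
    refine tsum_congr fun m => ?_
    rw [etaTerm, Complex.exp_eq_exp_iff_exists_int]
    refine ⟨k + m + 1, ?_⟩
    simp only [Equiv.subLeft_apply]
    push_cast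
    ring

lemma hasSum_sigma {τ : ℂ} (hτ : 0 < τ.im) (z w : ℂ) :
    HasSum (fun l : ℤ × ℤ => coefA2 l * expA2 τ z w l)
      (jtheta τ z * jtheta τ w * jtheta τ (z + w) / dedekindEta τ) := by
  have hz := hasSum_jtheta hτ z
  have hw := hasSum_jtheta hτ w
  have hzw := hasSum_jtheta hτ (z + w)
  have s2 : Summable (fun p : ℤ × ℤ => thTerm τ z p.1 * thTerm τ w p.2) :=
    summable_mul_of_summable_norm (f := thTerm τ z) (g := thTerm τ w) hz.summable.norm hw.summable.norm
  have h2 := hz.mul hw s2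
  have s3 : Summable (fun p : (ℤ × ℤ) × ℤ =>
      thTerm τ z p.1.1 * thTerm τ w p.1.2 * thTerm τ (z + w) p.2) :=
    summable_mul_of_summable_norm
      (f := fun p : ℤ × ℤ => thTerm τ z p.1 * thTerm τ w p.2) (g := thTerm τ (z + w)) s2.norm hzw.summable.norm
  have h3 : HasSum (fun p : (ℤ × ℤ) × ℤ =>
      thTerm τ z p.1.1 * thTerm τ w p.1.2 * thTerm τ (z + w) p.2)
      (jtheta τ z * jtheta τ w * jtheta τ (z + w)) := h2.mul hzw s3
  rw [← tripleEquiv.hasSum_iff] at h3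
  have h4 : HasSum (fun p : (ℤ × ℤ) × ℤ => expA2 τ z w p.1 *
      Complex.exp ((π : ℂ) * I * ((p.2 + (p.1.1 + p.1.2 : ℤ) : ℤ) +
      (6 * (p.2 : ℂ) + 3 - 2 * (p.1.1 + p.1.2 : ℤ)) ^ 2 * τ / 12)))
      (jtheta τ z * jtheta τ w * jtheta τ (z + w)) := by
    have he : ((fun p : (ℤ × ℤ) × ℤ =>
      thTerm τ z p.1.1 * thTerm τ w p.1.2 * thTerm τ (z + w) p.2) ∘ tripleEquiv) =
      (fun p : (ℤ × ℤ) × ℤ => expA2 τ z w p.1 *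
      Complex.exp ((π : ℂ) * I * ((p.2 + (p.1.1 + p.1.2 : ℤ) : ℤ) +
      (6 * (p.2 : ℂ) + 3 - 2 * (p.1.1 + p.1.2 : ℤ)) ^ 2 * τ / 12))) := by
      funext p
      rw [← triple_term τ z w p.1 p.2]
      rfl
    rw [he] at h3
    exact h3
  have h5 := h4.prod_fiberwise (fun l => (h4.summable.prod_factor l).hasSum)
  have h6 := h5.div_const (dedekindEta τ)
  refine h6.congr_fun fun l => ?_
  have := eta_ne hτ
  dsimp only
  rw [tsum_mul_left, fiber_tsum hτ]
  field_simp

/-- The index map into `ℚ × (Fin 2 → ℚ)`. -/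
def idxA2 (l : ℤ × ℤ) : ℚ × (Fin 2 → ℚ) :=
  (((l.1 : ℚ) ^ 2 - l.1 * l.2 + (l.2 : ℚ) ^ 2) / 3,
    ![(2 * l.1 - l.2 : ℚ) / 3, (2 * l.2 - l.1 : ℚ) / 3])

lemma idxA2_inj : Function.Injective idxA2 := by
  intro a b h
  have h1 := congrFun (congrArg Prod.snd h) 0
  have h2 := congrFun (congrArg Prod.snd h) 1
  simp only [idxA2, Matrix.cons_val_zero, Matrix.cons_val_one] at h1 h2
  ext
  · have : (a.1 : ℚ) = b.1 := by linear_combination 2 * h1 + h2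
    exact_mod_cast this
  · have : (a.2 : ℚ) = b.2 := by linear_combination h1 + 2 * h2
    exact_mod_cast this

/-- The Fourier coefficients of `σ_{A₂}`. -/
def gA2 : ℚ × (Fin 2 → ℚ) → ℂ := Function.extend idxA2 coefA2 0

lemma gA2_support {p : ℚ × (Fin 2 → ℚ)} (h : gA2 p ≠ 0) : ∃ l, idxA2 l = p := by
  by_contra hc
  exact h (Function.extend_apply' _ _ _ hc)

lemma idxA2_norm (l : ℤ × ℤ) : 2 * (idxA2 l).1 = bilinQ !![2, 1; 1, 2] (idxA2 l).2 (idxA2 l).2 := by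
  rw [bilinQ_A2]
  simp only [idxA2, Matrix.cons_val_zero, Matrix.cons_val_one]
  ring

lemma sigma_expansion {τ : ℂ} (hτ : 0 < τ.im) (z : Fin 2 → ℂ) :
    HasSum (fun p : ℚ × (Fin 2 → ℚ) =>
        gA2 p * Complex.exp (2 * (π : ℂ) * I *
          ((p.1 : ℂ) * τ + bilinC !![2, 1; 1, 2] (fun i => (p.2 i : ℂ)) z))) (sigmaA2 τ z) := by
  rw [← idxA2_inj.hasSum_iff]
  · refine (hasSum_sigma hτ (z 0) (z 1)).congr_fun fun l => ?_
    simp only [Function.comp, gA2, idxA2_inj.extend_apply]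
    congr 1
    rw [expA2, bilinC_A2]
    simp only [idxA2, Matrix.cons_val_zero, Matrix.cons_val_one]
    congr 1
    push_cast
    ring
  · intro p hp
    have : gA2 p = 0 := Function.extend_apply' _ _ _ hp
    rw [this, zero_mul]

/-- `σ_{A₂}` is a holomorphic Jacobi form of singular weight `1` and
index `1` for the root lattice `A₂` (Gram matrix `!![2,1;1,2]`) with character `v_η^8` and
trivial Heisenberg character; its Fourier support satisfies `2n = (ℓ,ℓ)` (singular weight). -/
theorem statement15
    (vη8 : SL2Z → ℂ)
    (hvη8 : ∀ A : SL2Z, ∀ τ : ℂ, 0 < τ.im →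
      dedekindEta (((A.1 0 0 : ℂ) * τ + (A.1 0 1 : ℂ)) / ((A.1 1 0 : ℂ) * τ + (A.1 1 1 : ℂ))) ^ 8
        = vη8 A * ((A.1 1 0 : ℂ) * τ + (A.1 1 1 : ℂ)) ^ 4 * dedekindEta τ ^ 8) :
    ∃ g : ℚ × (Fin 2 → ℚ) → ℂ,
      IsJacobiForm !![2, 1; 1, 2] 1 1 vη8 (fun _ _ => 1) g sigmaA2 ∧
      ∀ p, g p ≠ 0 → 2 * p.1 = bilinQ !![2, 1; 1, 2] p.2 p.2 := by
  refine ⟨gA2, ⟨sigma_holo, ?_, ?_, ?_, ?_⟩, ?_⟩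
  · intro A τ hτ z
    have h := sigma_modular vη8 hvη8 A τ hτ z
    simpa only [Rat.cast_one, Complex.cpow_one, mul_one] using h
  · intro x y τ hτ z
    have h := sigma_elliptic x y τ z
    simpa only [Rat.cast_one, mul_one, one_mul] using h
  · intro p hp
    obtain ⟨l, rfl⟩ := gA2_support hp
    refine ⟨?_, ?_, ?_⟩
    · simp only [idxA2]
      have : (0 : ℚ) ≤ (l.1 : ℚ) ^ 2 - l.1 * l.2 + (l.2 : ℚ) ^ 2 := by
        nlinarith [sq_nonneg ((l.1 : ℚ) - l.2), sq_nonneg ((l.1 : ℚ) + l.2)]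
      positivity
    · intro x
      refine ⟨2 * (l.1 * x 0 + l.2 * x 1), ?_⟩
      rw [bilinQ_A2]
      simp only [idxA2, Matrix.cons_val_zero, Matrix.cons_val_one]
      push_cast
      ring
    · rw [mul_one, idxA2_norm, sub_self]
  · intro τ hτ z
    exact sigma_expansion hτ z
  · intro p hp
    obtain ⟨l, rfl⟩ := gA2_support hp
    exact idxA2_norm l
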